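/- arXiv:1909.02929 — 5 statements merged into one kernel-verified Lean document; each statement's English description precedes it below -/
import Mathlib

section
/- For every λ > 0, r > 0 and α > 2, the second moment of the beta negative binomial distribution satisfies ∑_{y=0}^{∞} y² · p(y; λ, r, α) = ((α+r−1)/(α−2))·λ + ((r+1)(α−1)/(r(α−2)))·λ². -/
noncomputable def betaFn (a b : ℝ) : ℝ := Real.Gamma a * Real.Gamma b / Real.Gamma (a + b)

noncomputable def bnbPmf (lam r a : ℝ) (y : ℕ) : ℝ :=
  Real.Gamma ((y : ℝ) + r) / (Real.Gamma ((y : ℝ) + 1) * Real.Gamma r) *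
    (betaFn (a + r) ((a - 1) * lam / r + (y : ℝ)) / betaFn a ((a - 1) * lam / r))

open MeasureTheory Set

/-- The unnormalised beta negative binomial weights, for positive shape parameters `a` and `b`. -/
noncomputable def bnbWeight (r a b : ℝ) (n : ℕ) : ℝ :=
  Real.Gamma ((n : ℝ) + r) / (Real.Gamma ((n : ℝ) + 1) * Real.Gamma r) * betaFn (a + r) (b + n)

lemma betaFn_pos {a b : ℝ} (ha : 0 < a) (hb : 0 < b) : 0 < betaFn a b :=
  ProbabilityTheory.beta_pos ha hb

lemma betaFn_comm (a b : ℝ) : betaFn a b = betaFn b a := by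
  simp only [betaFn, add_comm, mul_comm]

lemma betaFn_sub_one_add_one {a b : ℝ} (ha : 1 < a) (hb : 0 < b) :
    betaFn (a - 1) (b + 1) = b / (a - 1) * betaFn a b := by
  have h : Real.Gamma a = (a - 1) * Real.Gamma (a - 1) := by
    simpa using Real.Gamma_add_one (s := a - 1) (by linarith)
  have ha' : a - 1 ≠ 0 := by linarith
  simp only [betaFn]
  rw [Real.Gamma_add_one hb.ne', h, show a - 1 + (b + 1) = a + b by ring]
  field_simp

lemma lintegral_rpow_mul_one_sub_rpow {a b : ℝ} (ha : 0 < a) (hb : 0 < b) :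
    ∫⁻ x in Ioo (0 : ℝ) 1, ENNReal.ofReal (x ^ (b - 1) * (1 - x) ^ (a - 1)) =
      ENNReal.ofReal (betaFn a b) := by
  have hB : 0 < betaFn b a := betaFn_pos hb ha
  have hone := ProbabilityTheory.lintegral_betaPDF_eq_one hb ha
  rw [ProbabilityTheory.lintegral_betaPDF] at hone
  change ∫⁻ x in Ioo (0 : ℝ) 1,
    ENNReal.ofReal (1 / betaFn b a * x ^ (b - 1) * (1 - x) ^ (a - 1)) = 1 at hone
  rw [betaFn_comm a b, ← mul_one (ENNReal.ofReal (betaFn b a)), ← hone,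
    ← lintegral_const_mul _ (by fun_prop)]
  refine lintegral_congr fun x ↦ ?_
  rw [← ENNReal.ofReal_mul hB.le]
  congr 1
  field_simp

lemma Gamma_natCast_add {r : ℝ} (hr : 0 < r) (n : ℕ) :
    Real.Gamma ((n : ℝ) + r) = (ascPochhammer ℝ n).eval r * Real.Gamma r := by
  induction n with
  | zero => simp
  | succ n ih =>
    rw [show ((n + 1 : ℕ) : ℝ) + r = (n + r) + 1 by push_cast; ring,
      Real.Gamma_add_one (by positivity), ih, ascPochhammer_succ_eval]
    ring

lemma choose_add_sub_one_eq_Gamma {r : ℝ} (hr : 0 < r) (n : ℕ) :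
    Ring.choose (r + n - 1) n =
      Real.Gamma ((n : ℝ) + r) / (Real.Gamma ((n : ℝ) + 1) * Real.Gamma r) := by
  have h := Ring.factorial_nsmul_multichoose_eq_ascPochhammer r n
  rw [Ring.multichoose_eq, Polynomial.ascPochhammer_smeval_eq_eval, nsmul_eq_mul] at h
  have hG := (Real.Gamma_pos_of_pos hr).ne'
  have hf : (n.factorial : ℝ) ≠ 0 := by positivity
  rw [Gamma_natCast_add hr, Real.Gamma_nat_eq_factorial, ← h]
  field_simp

lemma hasSum_Gamma_mul_pow {r x : ℝ} (hr : 0 < r) (hx : |x| < 1) :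
    HasSum (fun n : ℕ ↦
      Real.Gamma ((n : ℝ) + r) / (Real.Gamma ((n : ℝ) + 1) * Real.Gamma r) * x ^ n)
      (1 / (1 - x) ^ r) := by
  have h := (Real.one_div_one_sub_rpow_hasFPowerSeriesOnBall_zero r).hasSum (y := x)
    (by simpa [enorm_eq_nnnorm, ← NNReal.coe_lt_coe] using hx)
  simpa [FormalMultilinearSeries.ofScalars_apply_eq, choose_add_sub_one_eq_Gamma hr, mul_comm]
    using h

/-- Gauss's summation formula in the form of the normalisation of the beta negative binomial
distribution. -/
lemma hasSum_bnbWeight {r a b : ℝ} (hr : 0 < r) (ha : 0 < a) (hb : 0 < b) :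
    HasSum (bnbWeight r a b) (betaFn a b) := by
  set c : ℕ → ℝ := fun n ↦
    Real.Gamma ((n : ℝ) + r) / (Real.Gamma ((n : ℝ) + 1) * Real.Gamma r) with hc
  have hc0 (n : ℕ) : 0 ≤ c n := by
    have h₁ := Real.Gamma_pos_of_pos (show 0 < (n : ℝ) + r by positivity)
    have h₂ := Real.Gamma_pos_of_pos (show 0 < (n : ℝ) + 1 by positivity)
    have h₃ := Real.Gamma_pos_of_pos hr
    simp only [hc]
    positivity
  have hw0 (n : ℕ) : 0 ≤ bnbWeight r a b n :=
    mul_nonneg (hc0 n) (betaFn_pos (by positivity) (by positivity)).le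
  have hterm (n : ℕ) : ENNReal.ofReal (bnbWeight r a b n) = ∫⁻ x in Ioo (0 : ℝ) 1,
      ENNReal.ofReal (c n * (x ^ (b + n - 1) * (1 - x) ^ (a + r - 1))) := by
    simp_rw [ENNReal.ofReal_mul (hc0 n)]
    rw [lintegral_const_mul _ (by fun_prop),
      lintegral_rpow_mul_one_sub_rpow (by positivity) (by positivity),
      ← ENNReal.ofReal_mul (hc0 n)]
    rfl
  have hpoint : ∀ x ∈ Ioo (0 : ℝ) 1,
      ∑' n : ℕ, ENNReal.ofReal (c n * (x ^ (b + n - 1) * (1 - x) ^ (a + r - 1))) =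
        ENNReal.ofReal (x ^ (b - 1) * (1 - x) ^ (a - 1)) := by
    rintro x ⟨hx0, hx1⟩
    have hy : 0 < 1 - x := by linarith
    have hsum : HasSum (fun n : ℕ ↦ c n * (x ^ (b + n - 1) * (1 - x) ^ (a + r - 1)))
        (x ^ (b - 1) * (1 - x) ^ (a - 1)) := by
      have h := (hasSum_Gamma_mul_pow hr (by rwa [abs_of_pos hx0] : |x| < 1)).mul_left
        (x ^ (b - 1) * (1 - x) ^ (a + r - 1))
      have hval : x ^ (b - 1) * (1 - x) ^ (a + r - 1) * (1 / (1 - x) ^ r) =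
          x ^ (b - 1) * (1 - x) ^ (a - 1) := by
        have := (Real.rpow_pos_of_pos hy r).ne'
        rw [show a + r - 1 = (a - 1) + r by ring, Real.rpow_add hy]
        field_simp
      rw [hval] at h
      refine h.congr_fun fun n ↦ ?_
      rw [show b + n - 1 = (b - 1) + n by ring, Real.rpow_add_natCast hx0.ne']
      simp only [hc]
      ring
    rw [← ENNReal.ofReal_tsum_of_nonneg (fun n ↦ mul_nonneg (hc0 n) (by positivity))
      hsum.summable, hsum.tsum_eq]
  have htotal : ∑' n, ENNReal.ofReal (bnbWeight r a b n) = ENNReal.ofReal (betaFn a b) := by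
    simp_rw [hterm]
    rw [← lintegral_tsum fun n ↦ by fun_prop, ← lintegral_rpow_mul_one_sub_rpow ha hb]
    exact setLIntegral_congr_fun measurableSet_Ioo hpoint
  have h := ENNReal.hasSum_toReal (f := fun n ↦ ENNReal.ofReal (bnbWeight r a b n))
    (by rw [htotal]; exact ENNReal.ofReal_ne_top)
  rw [← ENNReal.tsum_toReal_eq fun n ↦ ENNReal.ofReal_ne_top, htotal] at h
  simpa [ENNReal.toReal_ofReal, hw0, (betaFn_pos ha hb).le] using h

lemma succ_mul_bnbWeight_succ {r : ℝ} (hr : 0 < r) (a b : ℝ) (n : ℕ) :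
    ((n + 1 : ℕ) : ℝ) * bnbWeight r a b (n + 1) =
      r * bnbWeight (r + 1) (a - 1) (b + 1) n := by
  have hn : (n : ℝ) + 1 ≠ 0 := by positivity
  simp only [bnbWeight]
  push_cast
  rw [Real.Gamma_add_one hr.ne', Real.Gamma_add_one hn,
    show (n : ℝ) + 1 + r = n + (r + 1) by ring, show a - 1 + (r + 1) = a + r by ring,
    show b + ((n : ℝ) + 1) = b + 1 + n by ring]
  field_simp

lemma hasSum_mul_bnbWeight {r a b : ℝ} (hr : 0 < r) (ha : 1 < a) (hb : 0 < b) :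
    HasSum (fun n : ℕ ↦ (n : ℝ) * bnbWeight r a b n) (r * betaFn (a - 1) (b + 1)) := by
  have h := (hasSum_bnbWeight (r := r + 1) (a := a - 1) (b := b + 1)
    (by linarith) (by linarith) (by linarith)).mul_left r
  rw [← hasSum_nat_add_iff' 1]
  simpa only [succ_mul_bnbWeight_succ hr, Finset.sum_range_one, Nat.cast_zero, zero_mul,
    sub_zero] using h

lemma hasSum_sq_mul_bnbWeight {r a b : ℝ} (hr : 0 < r) (ha : 2 < a) (hb : 0 < b) :
    HasSum (fun n : ℕ ↦ (n : ℝ) ^ 2 * bnbWeight r a b n)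
      (r * ((r + 1) * betaFn (a - 1 - 1) (b + 1 + 1) + betaFn (a - 1) (b + 1))) := by
  have h := ((hasSum_mul_bnbWeight (r := r + 1) (a := a - 1) (b := b + 1)
    (by linarith) (by linarith) (by linarith)).add (hasSum_bnbWeight (r := r + 1) (a := a - 1)
    (b := b + 1) (by linarith) (by linarith) (by linarith))).mul_left r
  rw [← hasSum_nat_add_iff' 1]
  simp only [Finset.sum_range_one, Nat.cast_zero, zero_pow two_ne_zero, zero_mul, sub_zero]
  refine h.congr_fun fun n ↦ ?_
  rw [sq, mul_assoc, succ_mul_bnbWeight_succ hr]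
  push_cast
  ring

theorem bnb_second_moment (lam r a : ℝ) (hlam : 0 < lam) (hr : 0 < r) (ha : 2 < a) :
    ∑' y : ℕ, (y : ℝ) ^ 2 * bnbPmf lam r a y =
      ((a + r - 1) / (a - 2)) * lam + ((r + 1) * (a - 1) / (r * (a - 2))) * lam ^ 2 := by
  have ha1 : 0 < a - 1 := by linarith
  have ha2 : 0 < a - 2 := by linarith
  have hb : 0 < (a - 1) * lam / r := by positivity
  have hB := (betaFn_pos (by linarith : 0 < a) hb).ne'
  have h := (hasSum_sq_mul_bnbWeight hr ha hb).div_const (betaFn a ((a - 1) * lam / r))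
  have hpmf (y : ℕ) : (y : ℝ) ^ 2 * bnbPmf lam r a y =
      (y : ℝ) ^ 2 * bnbWeight r a ((a - 1) * lam / r) y / betaFn a ((a - 1) * lam / r) := by
    simp only [bnbPmf, bnbWeight]
    ring
  simp_rw [hpmf]
  rw [h.tsum_eq, betaFn_sub_one_add_one (a := a - 1) (by linarith) (by linarith),
    betaFn_sub_one_add_one (by linarith) hb, show a - 1 - 1 = a - 2 by ring]
  field_simp
  ring
end

section
/- Let r > 0, α > 1 and λ₁ ≥ λ₂ > 0. Then the beta negative binomial distribution with mean λ₁ is stochastically greater than the one with mean λ₂: for every z ∈ ℕ, ∑_{y=0}^{z} p(y; λ₁, r, α) ≤ ∑_{y=0}^{z} p(y; λ₂, r, α). -/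
open MeasureTheory Set

/-- The unnormalised density of the beta distribution with shape parameters `u` and `v`. -/
noncomputable def betaWeight (u v x : ℝ) : ℝ := x ^ (u - 1) * (1 - x) ^ (v - 1)

theorem integrableOn_betaWeight {u v : ℝ} (hu : 0 < u) (hv : 0 < v) :
    IntegrableOn (betaWeight u v) (Ioo 0 1) := by
  have h := Complex.betaIntegral_convergent (u := u) (v := v) (by simpa) (by simpa)
  rw [intervalIntegrable_iff_integrableOn_Ioo_of_le zero_le_one] at h
  refine (Integrable.re h).congr ?_
  refine ae_restrict_of_forall_mem measurableSet_Ioo fun x hx ↦ ?_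
  have h1 : (0 : ℝ) ≤ 1 - x := by linarith [hx.2]
  simp only [RCLike.re_to_complex, betaWeight]
  norm_cast
  rw [← Complex.ofReal_cpow hx.1.le, ← Complex.ofReal_cpow h1, Complex.re_mul_ofReal,
    Complex.ofReal_re]

theorem integral_betaWeight {u v : ℝ} (hu : 0 < u) (hv : 0 < v) :
    ∫ x in Ioo (0 : ℝ) 1, betaWeight u v x = betaFn v u := by
  have hB : betaFn v u = ProbabilityTheory.beta u v := by
    simp only [betaFn, ProbabilityTheory.beta, add_comm, mul_comm]
  have h := Complex.betaIntegral_convergent (u := u) (v := v) (by simpa) (by simpa)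
  rw [intervalIntegrable_iff_integrableOn_Ioo_of_le zero_le_one] at h
  rw [hB, ProbabilityTheory.beta_eq_betaIntegralReal u v hu hv, Complex.betaIntegral,
    intervalIntegral.integral_of_le zero_le_one, integral_Ioc_eq_integral_Ioo,
    ← RCLike.re_to_complex, ← integral_re h]
  refine setIntegral_congr_fun measurableSet_Ioo fun x hx ↦ ?_
  have h1 : (0 : ℝ) ≤ 1 - x := by linarith [hx.2]
  simp only [RCLike.re_to_complex, betaWeight]
  norm_cast
  rw [← Complex.ofReal_cpow hx.1.le, ← Complex.ofReal_cpow h1, Complex.re_mul_ofReal,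
    Complex.ofReal_re]

theorem betaFn_pos_s4 {u v : ℝ} (hu : 0 < u) (hv : 0 < v) : 0 < betaFn u v :=
  ProbabilityTheory.beta_pos hu hv

theorem betaWeight_nonneg (u v : ℝ) {x : ℝ} (hx : x ∈ Ioo (0 : ℝ) 1) :
    0 ≤ betaWeight u v x :=
  mul_nonneg (Real.rpow_nonneg hx.1.le _) (Real.rpow_nonneg (sub_nonneg.2 hx.2.le) _)

theorem betaWeight_add (u v d e : ℝ) {x : ℝ} (hx : x ∈ Ioo (0 : ℝ) 1) :
    betaWeight (u + d) (v + e) x = x ^ d * (1 - x) ^ e * betaWeight u v x := by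
  rw [betaWeight, betaWeight, add_sub_right_comm, add_sub_right_comm, Real.rpow_add hx.1,
    Real.rpow_add (sub_pos.2 hx.2)]
  ring

/-- The mean of an antitone function under the beta distribution decreases as the first shape
parameter grows. -/
theorem AntitoneOn.integral_mul_betaWeight_div_le {G : ℝ → ℝ} (hG : AntitoneOn G (Icc 0 1))
    {u d v : ℝ} (hu : 0 < u) (hd : 0 ≤ d) (hv : 0 < v)
    (hint : ∀ w, 0 < w → IntegrableOn (fun x ↦ G x * betaWeight w v x) (Ioo 0 1)) :
    (∫ x in Ioo (0 : ℝ) 1, G x * betaWeight (u + d) v x) / betaFn v (u + d) ≤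
      (∫ x in Ioo (0 : ℝ) 1, G x * betaWeight u v x) / betaFn v u := by
  rcases hd.eq_or_lt with rfl | hd
  · simp
  have hud : 0 < u + d := by positivity
  have hB1 := betaFn_pos_s4 hv hud
  have hB2 := betaFn_pos_s4 hv hu
  have hW : ∀ x ∈ Ioo (0 : ℝ) 1, betaWeight (u + d) v x = x ^ d * betaWeight u v x := by
    intro x hx
    simpa using betaWeight_add u v d 0 hx
  have hle : betaFn v (u + d) ≤ betaFn v u := by
    rw [← integral_betaWeight hud hv, ← integral_betaWeight hu hv]
    refine setIntegral_mono_on (integrableOn_betaWeight hud hv) (integrableOn_betaWeight hu hv)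
      measurableSet_Ioo fun x hx ↦ ?_
    rw [hW x hx]
    exact mul_le_of_le_one_left (betaWeight_nonneg u v hx)
      (Real.rpow_le_one hx.1.le hx.2.le hd.le)
  set K := betaFn v (u + d) / betaFn v u with hK
  have hK0 : 0 < K := div_pos hB1 hB2
  have hK1 : K ≤ 1 := (div_le_one hB2).2 hle
  -- the point where the two normalised densities cross
  set t := K ^ d⁻¹ with ht
  have htK : t ^ d = K := Real.rpow_inv_rpow hK0.le hd.ne'
  have htmem : t ∈ Icc (0 : ℝ) 1 :=
    ⟨Real.rpow_nonneg hK0.le _, Real.rpow_le_one hK0.le hK1 (inv_nonneg.2 hd.le)⟩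
  have hpt : ∀ x ∈ Ioo (0 : ℝ) 1,
      (G x * betaWeight (u + d) v x - K * (G x * betaWeight u v x)) ≤
        G t * (betaWeight (u + d) v x - K * betaWeight u v x) := by
    intro x hx
    have hw := betaWeight_nonneg u v hx
    have hcross : (G x - G t) * (x ^ d - K) ≤ 0 := by
      rw [← htK]
      rcases le_total x t with h | h
      · exact mul_nonpos_of_nonneg_of_nonpos
          (sub_nonneg.2 (hG (Ioo_subset_Icc_self hx) htmem h))
          (sub_nonpos.2 (Real.rpow_le_rpow hx.1.le h hd.le))
      · exact mul_nonpos_of_nonpos_of_nonneg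
          (sub_nonpos.2 (hG htmem (Ioo_subset_Icc_self hx) h))
          (sub_nonneg.2 (Real.rpow_le_rpow htmem.1 h hd.le))
    rw [hW x hx]
    linarith [mul_nonpos_of_nonpos_of_nonneg hcross hw]
  have hmono := setIntegral_mono_on ((hint _ hud).sub ((hint _ hu).const_mul K))
    (((integrableOn_betaWeight hud hv).sub
      ((integrableOn_betaWeight hu hv).const_mul K)).const_mul (G t)) measurableSet_Ioo hpt
  simp only [Pi.sub_apply] at hmono
  rw [integral_sub (hint _ hud) ((hint _ hu).const_mul K), integral_const_mul, integral_const_mul,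
    integral_sub (integrableOn_betaWeight hud hv) ((integrableOn_betaWeight hu hv).const_mul K),
    integral_const_mul, integral_betaWeight hud hv, integral_betaWeight hu hv, hK,
    div_mul_cancel₀ _ hB2.ne', sub_self, mul_zero, sub_nonpos] at hmono
  rw [div_le_iff₀ hB1]
  exact hmono.trans_eq (by ring)

/-- The coefficient `Γ(y + r) / (y! Γ(r))` of the negative binomial distribution. -/
noncomputable def negBinCoeff (r : ℝ) (y : ℕ) : ℝ :=
  Real.Gamma ((y : ℝ) + r) / (Real.Gamma ((y : ℝ) + 1) * Real.Gamma r)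

theorem negBinCoeff_nonneg {r : ℝ} (hr : 0 < r) (y : ℕ) : 0 ≤ negBinCoeff r y := by
  have h1 : 0 < Real.Gamma ((y : ℝ) + r) := Real.Gamma_pos_of_pos (by positivity)
  have h2 : 0 < Real.Gamma ((y : ℝ) + 1) := Real.Gamma_pos_of_pos (by positivity)
  have h3 : 0 < Real.Gamma r := Real.Gamma_pos_of_pos hr
  unfold negBinCoeff
  positivity

theorem negBinCoeff_zero {r : ℝ} (hr : 0 < r) : negBinCoeff r 0 = 1 := by
  have h3 : 0 < Real.Gamma r := Real.Gamma_pos_of_pos hr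
  simp [negBinCoeff, h3.ne']

theorem negBinCoeff_succ {r : ℝ} (hr : 0 < r) (y : ℕ) :
    negBinCoeff r (y + 1) * (y + 1) = (y + r) * negBinCoeff r y := by
  have h2 : 0 < Real.Gamma ((y : ℝ) + 1) := Real.Gamma_pos_of_pos (by positivity)
  have h3 : 0 < Real.Gamma r := Real.Gamma_pos_of_pos hr
  have h4 : (y : ℝ) + r ≠ 0 := by positivity
  have h5 : (y : ℝ) + 1 ≠ 0 := by positivity
  unfold negBinCoeff
  push_cast
  rw [add_right_comm (y : ℝ) 1 r, Real.Gamma_add_one h4, Real.Gamma_add_one h5]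
  field_simp

/-- The negative binomial distribution function at `z`, with success probability `1 - x`. -/
noncomputable def negBinCDF (r : ℝ) (z : ℕ) (x : ℝ) : ℝ :=
  ∑ y ∈ Finset.range (z + 1), negBinCoeff r y * (x ^ y * (1 - x) ^ r)

theorem hasDerivAt_negBinCDF {r : ℝ} (hr : 0 < r) (z : ℕ) {x : ℝ} (hx : x < 1) :
    HasDerivAt (negBinCDF r z)
      (-((z + r) * negBinCoeff r z * (x ^ z * (1 - x) ^ (r - 1)))) x := by
  have hx1 : 0 < 1 - x := sub_pos.2 hx
  have hpow : HasDerivAt (fun x : ℝ ↦ (1 - x) ^ r) (-(r * (1 - x) ^ (r - 1))) x := by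
    convert! ((hasDerivAt_id x).const_sub 1).rpow_const (p := r) (Or.inl hx1.ne') using 1
    simp
  induction z with
  | zero =>
    unfold negBinCDF
    simpa [negBinCoeff_zero hr] using hpow
  | succ z ih =>
    have hstep := ih.add
      (((hasDerivAt_pow (z + 1) x).mul hpow).const_mul (negBinCoeff r (z + 1)))
    have hfun : negBinCDF r (z + 1) = fun x ↦
        negBinCDF r z x + negBinCoeff r (z + 1) * (x ^ (z + 1) * (1 - x) ^ r) := by
      funext x
      exact Finset.sum_range_succ _ _
    rw [hfun]
    convert! hstep using 1
    have hr1 : (1 - x) ^ r = (1 - x) ^ (r - 1) * (1 - x) := by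
      rw [← Real.rpow_add_one hx1.ne', sub_add_cancel]
    rw [hr1, ← negBinCoeff_succ hr z]
    push_cast
    ring

theorem antitoneOn_negBinCDF {r : ℝ} (hr : 0 < r) (z : ℕ) :
    AntitoneOn (negBinCDF r z) (Icc 0 1) := by
  refine antitoneOn_of_hasDerivWithinAt_nonpos (convex_Icc 0 1) ?_
    (f' := fun x ↦ -((z + r) * negBinCoeff r z * (x ^ z * (1 - x) ^ (r - 1)))) ?_ ?_
  · have : Continuous fun x : ℝ ↦ (1 - x) ^ r :=
      (continuous_const.sub continuous_id).rpow_const fun _ ↦ Or.inr hr.le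
    unfold negBinCDF
    fun_prop
  · intro x hx
    rw [interior_Icc] at hx
    exact (hasDerivAt_negBinCDF hr z hx.2).hasDerivWithinAt
  · intro x hx
    rw [interior_Icc] at hx
    have := negBinCoeff_nonneg hr z
    have := hx.1
    have : 0 < 1 - x := sub_pos.2 hx.2
    rw [neg_nonpos]
    positivity

theorem negBinCDF_mul_betaWeight (r a b : ℝ) (z : ℕ) {x : ℝ} (hx : x ∈ Ioo (0 : ℝ) 1) :
    negBinCDF r z x * betaWeight b a x =
      ∑ y ∈ Finset.range (z + 1), negBinCoeff r y * betaWeight (b + y) (a + r) x := by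
  rw [negBinCDF, Finset.sum_mul]
  refine Finset.sum_congr rfl fun y _ ↦ ?_
  rw [betaWeight_add b a y r hx, Real.rpow_natCast, mul_assoc]

theorem integrableOn_negBinCDF_mul_betaWeight {r a b : ℝ} (hr : 0 < r) (ha : 0 < a) (hb : 0 < b)
    (z : ℕ) : IntegrableOn (fun x ↦ negBinCDF r z x * betaWeight b a x) (Ioo 0 1) := by
  refine IntegrableOn.congr_fun (integrable_finsetSum _ fun y _ ↦
    (integrableOn_betaWeight (u := b + (y : ℕ)) (v := a + r) (by positivity) (by positivity)).const_mul
      (negBinCoeff r y)) (fun x hx ↦ (negBinCDF_mul_betaWeight r a b z hx).symm) measurableSet_Ioo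

theorem integral_negBinCDF_mul_betaWeight {r a b : ℝ} (hr : 0 < r) (ha : 0 < a) (hb : 0 < b)
    (z : ℕ) : ∫ x in Ioo (0 : ℝ) 1, negBinCDF r z x * betaWeight b a x =
      ∑ y ∈ Finset.range (z + 1), negBinCoeff r y * betaFn (a + r) (b + y) := by
  rw [setIntegral_congr_fun measurableSet_Ioo fun x hx ↦ negBinCDF_mul_betaWeight r a b z hx,
    integral_finsetSum _ fun y _ ↦ (integrableOn_betaWeight (u := b + (y : ℕ)) (v := a + r)
      (by positivity) (by positivity)).const_mul (negBinCoeff r y)]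
  refine Finset.sum_congr rfl fun y _ ↦ ?_
  rw [integral_const_mul, integral_betaWeight (by positivity) (by positivity)]

/-- The beta negative binomial distribution is a beta mixture of negative binomial ones. -/
theorem sum_bnbPmf_eq_integral {lam r a : ℝ} (hr : 0 < r) (ha : 1 < a) (hlam : 0 < lam) (z : ℕ) :
    ∑ y ∈ Finset.range (z + 1), bnbPmf lam r a y =
      (∫ x in Ioo (0 : ℝ) 1, negBinCDF r z x * betaWeight ((a - 1) * lam / r) a x) /
        betaFn a ((a - 1) * lam / r) := by
  have ha1 : 0 < a - 1 := sub_pos.2 ha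
  rw [integral_negBinCDF_mul_betaWeight hr (by linarith) (by positivity), Finset.sum_div]
  refine Finset.sum_congr rfl fun y _ ↦ ?_
  exact (mul_div_assoc _ _ _).symm

theorem bnb_stochastic_order (r a lam1 lam2 : ℝ) (hr : 0 < r) (ha : 1 < a)
    (h2 : 0 < lam2) (h12 : lam2 ≤ lam1) (z : ℕ) :
    ∑ y ∈ Finset.range (z + 1), bnbPmf lam1 r a y ≤
      ∑ y ∈ Finset.range (z + 1), bnbPmf lam2 r a y := by
  have ha0 : 0 < a := by linarith
  have ha1 : 0 < a - 1 := sub_pos.2 ha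
  rw [sum_bnbPmf_eq_integral hr ha (h2.trans_le h12), sum_bnbPmf_eq_integral hr ha h2]
  have hle : (a - 1) * lam2 / r ≤ (a - 1) * lam1 / r := by gcongr
  have h := (antitoneOn_negBinCDF hr z).integral_mul_betaWeight_div_le
    (u := (a - 1) * lam2 / r) (by positivity) (sub_nonneg.2 hle) ha0
    fun w hw ↦ integrableOn_negBinCDF_mul_betaWeight hr ha0 hw z
  rwa [add_sub_cancel] at h
end

section
/- For every fixed y ∈ ℕ, λ > 0 and r > 0, as the tail parameter diverges the beta negative binomial pmf converges to the negative binomial pmf with dispersion r and success probability λ/(r+λ): lim_{α→∞} p(y; λ, r, α) = (Γ(y+r)/(Γ(y+1)Γ(r))) · (r/(r+λ))^r · (λ/(r+λ))^y. -/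
open Filter Topology

/-- Wendel's upper bound for ratios of Gamma functions. -/
theorem Gamma_add_le_mul_rpow {x s : ℝ} (hx : 0 < x) (hs : 0 ≤ s) (hs1 : s ≤ 1) :
    Real.Gamma (x + s) ≤ Real.Gamma x * x ^ s := by
  rcases hs.eq_or_lt with rfl | hs0
  · simp
  rcases hs1.eq_or_lt with rfl | hs1
  · rw [Real.Gamma_add_one hx.ne', Real.rpow_one, mul_comm]
  have hG := Real.Gamma_pos_of_pos hx
  have h := Real.Gamma_mul_add_mul_le_rpow_Gamma_mul_rpow_Gamma hx (by linarith : 0 < x + 1)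
    (by linarith : 0 < 1 - s) hs0 (by ring)
  have hpow : Real.Gamma x ^ (1 - s) * Real.Gamma x ^ s = Real.Gamma x := by
    rw [← Real.rpow_add hG]; simp
  calc Real.Gamma (x + s) = Real.Gamma ((1 - s) * x + s * (x + 1)) := by ring_nf
    _ ≤ _ := h
    _ = Real.Gamma x * x ^ s := by
      rw [Real.Gamma_add_one hx.ne', Real.mul_rpow hx.le hG.le]
      linear_combination x ^ s * hpow

/-- Wendel's lower bound for ratios of Gamma functions. -/
theorem rpow_le_Gamma_add_div {x s : ℝ} (hx : 0 < x) (hs : 0 ≤ s) (hs1 : s ≤ 1) :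
    (x / (x + s)) ^ (1 - s) ≤ Real.Gamma (x + s) / (Real.Gamma x * x ^ s) := by
  have hG := Real.Gamma_pos_of_pos hx
  have hxs : 0 < x + s := by linarith
  have h := Gamma_add_le_mul_rpow hxs (sub_nonneg.2 hs1) (by linarith : 1 - s ≤ 1)
  rw [show x + s + (1 - s) = x + 1 by ring, Real.Gamma_add_one hx.ne'] at h
  have hpow : x ^ (1 - s) * x ^ s = x := by
    rw [← Real.rpow_add hx]; simp
  rw [Real.div_rpow hx.le hxs.le, div_le_div_iff₀ (by positivity) (by positivity)]
  calc x ^ (1 - s) * (Real.Gamma x * x ^ s) = x * Real.Gamma x := by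
        linear_combination Real.Gamma x * hpow
    _ ≤ _ := h

theorem tendsto_Gamma_add_div_of_le_one {s : ℝ} (hs : 0 ≤ s) (hs1 : s ≤ 1) :
    Tendsto (fun x : ℝ => Real.Gamma (x + s) / (Real.Gamma x * x ^ s)) atTop (𝓝 1) := by
  have hlim : Tendsto (fun x : ℝ => (x / (x + s)) ^ (1 - s)) atTop (𝓝 1) := by
    have h : Tendsto (fun x : ℝ => 1 - s / (x + s)) atTop (𝓝 1) := by
      simpa using (tendsto_const_nhds (x := (1 : ℝ))).sub
        ((tendsto_atTop_add_const_right atTop s tendsto_id).const_div_atTop s)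
    have h' : Tendsto (fun x : ℝ => x / (x + s)) atTop (𝓝 1) := by
      refine h.congr' ?_
      filter_upwards [eventually_gt_atTop 0] with x hx
      have : x + s ≠ 0 := by positivity
      field_simp
      ring
    simpa using h'.rpow_const (p := 1 - s) (Or.inl one_ne_zero)
  refine tendsto_of_tendsto_of_tendsto_of_le_of_le' hlim tendsto_const_nhds ?_ ?_
  · filter_upwards [eventually_gt_atTop 0] with x hx using rpow_le_Gamma_add_div hx hs hs1
  · filter_upwards [eventually_gt_atTop 0] with x hx
    have hG := Real.Gamma_pos_of_pos hx
    exact div_le_one_of_le₀ (Gamma_add_le_mul_rpow hx hs hs1) (by positivity)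

/-- `Γ (x + s) ∼ Γ x * x ^ s` as `x → ∞`, for fixed `s ≥ 0`. -/
theorem tendsto_Gamma_add_div {s : ℝ} (hs : 0 ≤ s) :
    Tendsto (fun x : ℝ => Real.Gamma (x + s) / (Real.Gamma x * x ^ s)) atTop (𝓝 1) := by
  suffices h : ∀ (n : ℕ) (t : ℝ), 0 ≤ t → t ≤ 1 →
      Tendsto (fun x : ℝ => Real.Gamma (x + (t + n)) / (Real.Gamma x * x ^ (t + n)))
        atTop (𝓝 1) by
    simpa using h ⌊s⌋₊ (s - ⌊s⌋₊) (sub_nonneg.2 (Nat.floor_le hs))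
      (by linarith [Nat.lt_floor_add_one s])
  intro n t ht ht1
  induction n with
  | zero => simpa using tendsto_Gamma_add_div_of_le_one ht ht1
  | succ n ih =>
    have h : Tendsto (fun x : ℝ => 1 + (t + n) / x) atTop (𝓝 1) := by
      simpa using (tendsto_const_nhds (x := (1 : ℝ))).add
        (tendsto_id.const_div_atTop (t + (n : ℝ)))
    have hmul := ih.mul h
    rw [one_mul] at hmul
    refine hmul.congr' ?_
    filter_upwards [eventually_gt_atTop 0] with x hx
    have hG := Real.Gamma_pos_of_pos hx
    have hp : 0 < x ^ (t + (n : ℝ)) := Real.rpow_pos_of_pos hx _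
    have hxt : x + (t + n) ≠ 0 := by positivity
    rw [Nat.cast_succ, ← add_assoc t, ← add_assoc x (t + n) 1, Real.Gamma_add_one hxt,
      Real.rpow_add_one hx.ne']
    field_simp

/-- The Beta function ratio, normalised by the leading power behaviour of each Gamma ratio. -/
theorem betaFn_add_div_betaFn {a b s : ℝ} (ha : 0 < a) (hb : 0 < b) (hs : 0 ≤ s) (y : ℕ) :
    betaFn (a + s) (b + y) / betaFn a b =
      Real.Gamma (a + s) / (Real.Gamma a * a ^ s) *
        (Real.Gamma (b + y) / (Real.Gamma b * b ^ (y : ℝ))) /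
        (Real.Gamma (a + b + (s + y)) / (Real.Gamma (a + b) * (a + b) ^ (s + y))) *
        (a / (a + b)) ^ s * (b / (a + b)) ^ y := by
  have hab : 0 < a + b := add_pos ha hb
  have hGa := Real.Gamma_pos_of_pos ha
  have hGb := Real.Gamma_pos_of_pos hb
  have hGab := Real.Gamma_pos_of_pos hab
  have hGn : 0 < Real.Gamma (a + b + (s + y)) := Real.Gamma_pos_of_pos (by positivity)
  have hpa : 0 < a ^ s := Real.rpow_pos_of_pos ha _
  have hpab : 0 < (a + b) ^ s := Real.rpow_pos_of_pos hab _
  rw [betaFn, betaFn, show a + s + (b + y) = a + b + (s + y) by ring,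
    Real.div_rpow ha.le hab.le, div_pow, Real.rpow_add hab, Real.rpow_natCast,
    Real.rpow_natCast]
  field_simp

theorem bnb_tendsto_negBinomial (lam r : ℝ) (hlam : 0 < lam) (hr : 0 < r) (y : ℕ) :
    Filter.Tendsto (fun a : ℝ => bnbPmf lam r a y) Filter.atTop
      (nhds (Real.Gamma ((y : ℝ) + r) / (Real.Gamma ((y : ℝ) + 1) * Real.Gamma r) *
        (r / (r + lam)) ^ (r : ℝ) * (lam / (r + lam)) ^ (y : ℕ))) := by
  set b : ℝ → ℝ := fun a => (a - 1) * lam / r with hb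
  have hb_top : Tendsto b atTop atTop :=
    ((tendsto_atTop_add_const_right atTop (-1 : ℝ) tendsto_id).atTop_mul_const
      hlam).atTop_div_const hr
  have hab_top : Tendsto (fun a => a + b a) atTop atTop := tendsto_id.atTop_add_atTop hb_top
  have hGa := tendsto_Gamma_add_div hr.le
  have hGb := (tendsto_Gamma_add_div (Nat.cast_nonneg (α := ℝ) y)).comp hb_top
  have hGab := (tendsto_Gamma_add_div (s := r + y) (by positivity)).comp hab_top
  have hratio : Tendsto (fun a => b a / a) atTop (𝓝 (lam / r)) := by
    have h : Tendsto (fun a : ℝ => lam / r - lam / r / a) atTop (𝓝 (lam / r)) := by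
      simpa using (tendsto_const_nhds (x := lam / r)).sub
        (tendsto_id.const_div_atTop (lam / r))
    refine h.congr' ?_
    filter_upwards [eventually_gt_atTop 0] with a ha
    simp only [hb]
    field_simp
  have hden : Tendsto (fun a => 1 + b a / a) atTop (𝓝 (1 + lam / r)) :=
    tendsto_const_nhds.add hratio
  have hden0 : 1 + lam / r ≠ 0 := by positivity
  have ha_frac : Tendsto (fun a => a / (a + b a)) atTop (𝓝 (r / (r + lam))) := by
    have h := (tendsto_const_nhds (x := (1 : ℝ))).div hden hden0
    rw [show 1 / (1 + lam / r) = r / (r + lam) by field_simp] at h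
    refine h.congr' ?_
    filter_upwards [eventually_gt_atTop 0] with a ha
    simp only [Pi.div_apply]
    rw [one_add_div ha.ne', one_div_div]
  have hb_frac : Tendsto (fun a => b a / (a + b a)) atTop (𝓝 (lam / (r + lam))) := by
    have h := hratio.div hden hden0
    rw [show lam / r / (1 + lam / r) = lam / (r + lam) by field_simp] at h
    refine h.congr' ?_
    filter_upwards [eventually_gt_atTop 0] with a ha
    simp only [Pi.div_apply]
    rw [one_add_div ha.ne', div_div_div_cancel_right₀ ha.ne']
  have hlim := ((((hGa.mul hGb).div hGab one_ne_zero).mul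
    (ha_frac.rpow_const (p := r) (Or.inr hr.le))).mul (hb_frac.pow y)).const_mul
      (Real.Gamma ((y : ℝ) + r) / (Real.Gamma ((y : ℝ) + 1) * Real.Gamma r))
  rw [mul_one, div_one, one_mul, ← mul_assoc] at hlim
  refine hlim.congr' ?_
  filter_upwards [eventually_gt_atTop 0, hb_top.eventually_gt_atTop 0] with a ha hba
  exact congrArg _ (betaFn_add_div_betaFn ha hba hr.le y).symm
end

section
/- For every z > 0 and c ≥ 0, the digamma function satisfies 0 ≤ ψ(z+c) − ψ(z) ≤ (c+1)/z. -/
noncomputable def digamma (x : ℝ) : ℝ := deriv (fun t => Real.log (Real.Gamma t)) x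

theorem differentiableAt_log_Gamma {x : ℝ} (hx : 0 < x) :
    DifferentiableAt ℝ (fun t => Real.log (Real.Gamma t)) x :=
  (Real.differentiableAt_Gamma fun m => by
    have : (0 : ℝ) ≤ m := m.cast_nonneg
    linarith).log (Real.Gamma_pos_of_pos hx).ne'

theorem monotoneOn_digamma : MonotoneOn digamma (Set.Ioi 0) :=
  Real.convexOn_log_Gamma.monotoneOn_deriv fun _ hx => differentiableAt_log_Gamma hx

theorem digamma_add_one {x : ℝ} (hx : 0 < x) : digamma (x + 1) = digamma x + 1 / x := by
  have h : (fun t => Real.log (Real.Gamma (t + 1))) =ᶠ[nhds x]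
      fun t => Real.log (Real.Gamma t) + Real.log t := by
    filter_upwards [lt_mem_nhds hx] with t ht
    rw [Real.Gamma_add_one ht.ne', Real.log_mul ht.ne' (Real.Gamma_pos_of_pos ht).ne', add_comm]
  unfold digamma
  rw [← deriv_comp_add_const (f := fun t => Real.log (Real.Gamma t)), h.deriv_eq,
    deriv_fun_add (differentiableAt_log_Gamma hx) (Real.differentiableAt_log hx.ne'),
    Real.deriv_log, one_div]

theorem digamma_add_natCast_le {x : ℝ} (hx : 0 < x) (n : ℕ) :
    digamma (x + n) ≤ digamma x + n / x := by
  induction n with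
  | zero => simp
  | succ n ih =>
    have hn : (0 : ℝ) ≤ n := n.cast_nonneg
    have h : 1 / (x + n) ≤ 1 / x := one_div_le_one_div_of_le hx (by linarith)
    push_cast
    rw [← add_assoc, digamma_add_one (by linarith), add_div]
    linarith

theorem digamma_diff_bounds (z c : ℝ) (hz : 0 < z) (hc : 0 ≤ c) :
    0 ≤ digamma (z + c) - digamma z ∧ digamma (z + c) - digamma z ≤ (c + 1) / z := by
  have hzc : 0 < z + c := by linarith
  have hceil : c ≤ (⌈c⌉₊ : ℝ) := Nat.le_ceil c
  refine ⟨sub_nonneg.2 (monotoneOn_digamma hz hzc (by linarith)), ?_⟩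
  have hmono : digamma (z + c) ≤ digamma (z + (⌈c⌉₊ : ℝ)) :=
    monotoneOn_digamma hzc (Set.mem_Ioi.2 (by linarith)) (by linarith)
  have hdiv : (⌈c⌉₊ : ℝ) / z ≤ (c + 1) / z := by
    gcongr
    exact (Nat.ceil_lt_add_one hc).le
  linarith [digamma_add_natCast_le hz ⌈c⌉₊]
end

section
/- Let X be a real random variable on a probability space such that X ≥ x̄ almost surely for some constant x̄ > 0, and such that X is integrable. Then for every c > 0 the random variable log Γ(X + c) − log Γ(X) is integrable, i.e. E|log Γ(X+c) − log Γ(X)| < ∞. -/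
open MeasureTheory

/-- A secant slope bound for `log ∘ Gamma`, obtained by comparing with the unit step at `x + c`. -/
theorem log_Gamma_add_sub_le {x c : ℝ} (hx : 0 < x) (hc : 0 < c) :
    Real.log (Real.Gamma (x + c)) - Real.log (Real.Gamma x) ≤ c * (x + c) := by
  have hxc : 0 < x + c := by positivity
  have h := Real.convexOn_log_Gamma.slope_mono_adjacent (x := x) (y := x + c) (z := x + c + 1)
    hx (show 0 < x + c + 1 by positivity) (by linarith) (by linarith)
  simp only [Function.comp_apply, add_sub_cancel_left, div_one] at h
  rw [Real.Gamma_add_one hxc.ne', Real.log_mul hxc.ne' (Real.Gamma_pos_of_pos hxc).ne',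
    add_sub_cancel_right, div_le_iff₀ hc] at h
  nlinarith [Real.log_le_sub_one_of_pos hxc]

/-- On `[a, ∞)` the increments `log Γ(x + c) - log Γ(x)` are bounded below. -/
theorem exists_le_log_Gamma_add_sub {a c : ℝ} (ha : 0 < a) (hc : 0 < c) :
    ∃ m : ℝ, ∀ x, a ≤ x → m ≤ Real.log (Real.Gamma (x + c)) - Real.log (Real.Gamma x) := by
  set f : ℝ → ℝ := Real.log ∘ Real.Gamma
  have hf : ConvexOn ℝ (Set.Ioi 0) f := Real.convexOn_log_Gamma
  refine ⟨(f a - f (a / 2)) / (a - a / 2) * c, fun x hax => ?_⟩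
  have hx : 0 < x := ha.trans_le hax
  have ha2 : a / 2 ∈ Set.Ioi (0 : ℝ) := half_pos ha
  have hxc : x + c ∈ Set.Ioi (0 : ℝ) := add_pos hx hc
  have hslope : (f a - f (a / 2)) / (a - a / 2) ≤ (f (x + c) - f x) / (x + c - x) := by
    rcases hax.eq_or_lt with rfl | hlt
    · exact hf.slope_mono_adjacent ha2 hxc (half_lt_self ha) (by linarith)
    · exact (hf.slope_mono_adjacent ha2 hx (half_lt_self ha) hlt).trans
        (hf.slope_mono_adjacent ha hxc hlt (by linarith))
  rw [add_sub_cancel_left, le_div_iff₀ hc] at hslope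
  exact hslope

theorem continuousOn_log_Gamma :
    ContinuousOn (fun x => Real.log (Real.Gamma x)) (Set.Ioi 0) :=
  Real.convexOn_log_Gamma.continuousOn isOpen_Ioi

theorem logGamma_diff_integrable {Ω : Type*} [MeasurableSpace Ω] (μ : Measure Ω)
    [IsProbabilityMeasure μ] (X : Ω → ℝ) (xbar : ℝ) (hxbar : 0 < xbar)
    (hX : ∀ᵐ ω ∂μ, xbar ≤ X ω) (hint : Integrable X μ) (c : ℝ) (hc : 0 < c) :
    Integrable (fun ω => Real.log (Real.Gamma (X ω + c)) - Real.log (Real.Gamma (X ω))) μ := by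
  have hpos : ∀ x, 0 < max x xbar := fun x => lt_max_of_lt_right hxbar
  have hcont : Continuous fun x =>
      Real.log (Real.Gamma (max x xbar + c)) - Real.log (Real.Gamma (max x xbar)) :=
    (continuousOn_log_Gamma.comp_continuous (by fun_prop) fun x => add_pos (hpos x) hc).sub
      (continuousOn_log_Gamma.comp_continuous (by fun_prop) hpos)
  have hmeas : AEStronglyMeasurable
      (fun ω => Real.log (Real.Gamma (X ω + c)) - Real.log (Real.Gamma (X ω))) μ := by
    refine (hcont.comp_aestronglyMeasurable hint.aestronglyMeasurable).congr ?_
    filter_upwards [hX] with ω hω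
    simp [max_eq_left hω]
  obtain ⟨m, hm⟩ := exists_le_log_Gamma_add_sub hxbar hc
  refine integrable_of_le_of_le hmeas (g₁ := fun _ => m) (g₂ := fun ω => c * (X ω + c)) ?_ ?_
    (integrable_const m) ((hint.add (integrable_const c)).const_mul c)
  · filter_upwards [hX] with ω hω using hm _ hω
  · filter_upwards [hX] with ω hω using log_Gamma_add_sub_le (hxbar.trans_le hω) hc
end
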